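/- Let Z₁ and Z₂ be independent standard normal random variables and, for ρ ∈ (0,1), set V := ρ Z₁ + √(1−ρ²) Z₂. Let m₁ > 0 and m₂ > 0 satisfy m₁ ≥ ρ m₂, and let μ > 0. Define h(c) := P(Z₁ > −m₁, V < c) + P(Z₁ < −m₁, V > c) − P(Z₁ > −m₁, V > c) − P(Z₁ < −m₁, V < c). Then h(μ − m₂) > h(−m₂). -/

import Mathlib

open MeasureTheory ProbabilityTheory

/-!
Regress `X` on `V`: `X = W + f V`, where `f` is the increasing regression line and the centred
Gaussian noise `W` is independent of `V`. Raising the cutoff from `c` to `d` changes the gap by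
`P (a < X, V ∈ I) - P (X < a, V ∈ I)`, summed over `I = [c, d)` and `I = (c, d]`. Reflecting `W`
turns `X < a` into `f V - a < W` without changing its probability, whereas `a < X` says
`a - f V < W`. If `a ≤ f c`, the former implies the latter on `c ≤ V`, and strictly so: when `W` is
close to `0` and `V` is well inside `(c, d)`, only the latter holds. So both differences are
positive.
-/

section DiscordanceGap

variable {Ω : Type*} [MeasurableSpace Ω]

/-- The probability that `X` lies above the cutoff `a` minus the probability that it lies below,
both on the event `V ∈ I`; for probability measures this is `E[sign (X - a); V ∈ I]`. -/
noncomputable def aboveExcess (P : Measure Ω) (X V : Ω → ℝ) (a : ℝ) (I : Set ℝ) : ℝ :=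
  P.real {ω | a < X ω ∧ V ω ∈ I} - P.real {ω | X ω < a ∧ V ω ∈ I}

/-- Discordance probability minus concordance probability of `X` and `V` with respect to the
cutoffs `a` and `c`: the paper's `h(c)`, for `X = Z₁` and `a = -m₁`. -/
noncomputable def discordanceGap (P : Measure Ω) (X V : Ω → ℝ) (a c : ℝ) : ℝ :=
  P.real {ω | a < X ω ∧ V ω < c} + P.real {ω | X ω < a ∧ c < V ω}
    - P.real {ω | a < X ω ∧ c < V ω} - P.real {ω | X ω < a ∧ V ω < c}

variable {P : Measure Ω} {X V : Ω → ℝ} {a c d : ℝ} {I J : Set ℝ}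

lemma discordanceGap_eq_aboveExcess_sub :
    discordanceGap P X V a c
      = aboveExcess P X V a (Set.Iio c) - aboveExcess P X V a (Set.Ioi c) := by
  simp only [discordanceGap, aboveExcess, Set.mem_Iio, Set.mem_Ioi]
  ring

lemma measureReal_and_mem_union [IsFiniteMeasure P] (hV : AEMeasurable V P)
    (hJ : MeasurableSet J) (hIJ : Disjoint I J) (p : Ω → Prop) :
    P.real {ω | p ω ∧ V ω ∈ I ∪ J}
      = P.real {ω | p ω ∧ V ω ∈ I} + P.real {ω | p ω ∧ V ω ∈ J} := by
  have inter_eq : {ω | p ω ∧ V ω ∈ I ∪ J} ∩ V ⁻¹' J = {ω | p ω ∧ V ω ∈ J} := by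
    ext ω
    exact ⟨fun h ↦ ⟨h.1.1, h.2⟩, fun h ↦ ⟨⟨h.1, .inr h.2⟩, h.2⟩⟩
  have sdiff_eq : {ω | p ω ∧ V ω ∈ I ∪ J} \ V ⁻¹' J = {ω | p ω ∧ V ω ∈ I} := by
    ext ω
    exact ⟨fun h ↦ ⟨h.1.1, h.1.2.resolve_right h.2⟩,
      fun h ↦ ⟨⟨h.1, .inl h.2⟩, Set.disjoint_left.1 hIJ h.2⟩⟩
  rw [← measureReal_inter_add_sdiff₀ (hV.nullMeasurableSet_preimage hJ), inter_eq, sdiff_eq,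
    add_comm]

lemma aboveExcess_union [IsFiniteMeasure P] (hV : AEMeasurable V P)
    (hJ : MeasurableSet J) (hIJ : Disjoint I J) :
    aboveExcess P X V a (I ∪ J) = aboveExcess P X V a I + aboveExcess P X V a J := by
  simp only [aboveExcess, measureReal_and_mem_union hV hJ hIJ]
  ring

lemma discordanceGap_sub_discordanceGap [IsFiniteMeasure P] (hV : AEMeasurable V P)
    (hcd : c ≤ d) :
    discordanceGap P X V a d - discordanceGap P X V a c
      = aboveExcess P X V a (Set.Ico c d) + aboveExcess P X V a (Set.Ioc c d) := by
  have below : aboveExcess P X V a (Set.Iio d)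
      = aboveExcess P X V a (Set.Iio c) + aboveExcess P X V a (Set.Ico c d) := by
    rw [← Set.Iio_union_Ico_eq_Iio hcd]
    exact aboveExcess_union hV measurableSet_Ico
      (Set.disjoint_left.2 fun _ hx hx' ↦ hx.not_ge hx'.1)
  have above : aboveExcess P X V a (Set.Ioi c)
      = aboveExcess P X V a (Set.Ioc c d) + aboveExcess P X V a (Set.Ioi d) := by
    rw [← Set.Ioc_union_Ioi_eq_Ioi hcd]
    exact aboveExcess_union hV measurableSet_Ioi (Set.Ioc_disjoint_Ioi le_rfl)
  rw [discordanceGap_eq_aboveExcess_sub, discordanceGap_eq_aboveExcess_sub, below, above]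
  ring

end DiscordanceGap

section SymmetricNoise

variable {Ω : Type*} [MeasurableSpace Ω] {P : Measure Ω} [IsFiniteMeasure P]
  {V W : Ω → ℝ} {f : ℝ → ℝ} {a ε : ℝ} {I J : Set ℝ}

lemma identDistrib_neg_prodMk (hWV : IndepFun W V P) (hW : IdentDistrib (-W) W P P)
    (hV : AEMeasurable V P) :
    IdentDistrib (fun ω ↦ (-W ω, V ω)) (fun ω ↦ (W ω, V ω)) P P :=
  hW.prodMk (.refl hV) (hWV.comp measurable_neg measurable_id) hWV

lemma measureReal_Ioo_inter_preimage_pos (hWV : IndepFun W V P) (hW : AEMeasurable W P)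
    (hW0 : 0 ∈ (P.map W).support) (hε : 0 < ε) (hJ : MeasurableSet J)
    (hVJ : 0 < P.real (V ⁻¹' J)) :
    0 < P.real (W ⁻¹' Set.Ioo (-ε) ε ∩ V ⁻¹' J) := by
  have hWε : 0 < P.real (W ⁻¹' Set.Ioo (-ε) ε) := by
    rw [← map_measureReal_apply_of_aemeasurable hW measurableSet_Ioo]
    exact ENNReal.toReal_pos
      ((Measure.mem_support_iff_forall 0).1 hW0 _ (Ioo_mem_nhds (neg_lt_zero.2 hε) hε)).ne'
      (measure_ne_top _ _)
  rw [Measure.real, hWV.measure_inter_preimage_eq_mul _ _ measurableSet_Ioo hJ, ENNReal.toReal_mul]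
  exact mul_pos hWε hVJ

lemma aboveExcess_add_comp_pos (hWV : IndepFun W V P) (hW : IdentDistrib (-W) W P P)
    (hW0 : 0 ∈ (P.map W).support) (hV : AEMeasurable V P) (hf : Measurable f)
    (hI : MeasurableSet I) (haI : ∀ x ∈ I, a ≤ f x) (hε : 0 < ε)
    (hJ : MeasurableSet J) (hJI : J ⊆ I) (haJ : ∀ x ∈ J, a + ε ≤ f x)
    (hVJ : 0 < P.real (V ⁻¹' J)) :
    0 < aboveExcess P (fun ω ↦ W ω + f (V ω)) V a I := by
  have reflect : P.real {ω | -W ω + f (V ω) < a ∧ V ω ∈ I}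
      = P.real {ω | W ω + f (V ω) < a ∧ V ω ∈ I} := by
    have hS : MeasurableSet {p : ℝ × ℝ | p.1 + f p.2 < a ∧ p.2 ∈ I} :=
      (measurableSet_lt (measurable_fst.add (hf.comp measurable_snd)) measurable_const).inter
        (measurable_snd hI)
    exact congrArg ENNReal.toReal ((identDistrib_neg_prodMk hWV hW hV).measure_mem_eq hS)
  have hWm : AEMeasurable W P := hW.aemeasurable_snd
  have gain := measureReal_Ioo_inter_preimage_pos hWV hWm hW0 hε hJ hVJ
  have disj : Disjoint {ω | -W ω + f (V ω) < a ∧ V ω ∈ I}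
      (W ⁻¹' Set.Ioo (-ε) ε ∩ V ⁻¹' J) := by
    rw [Set.disjoint_left]
    rintro ω ⟨hlt, -⟩ ⟨⟨-, hWω⟩, hVω⟩
    linarith [haJ _ hVω]
  have incl : {ω | -W ω + f (V ω) < a ∧ V ω ∈ I} ∪ (W ⁻¹' Set.Ioo (-ε) ε ∩ V ⁻¹' J)
      ⊆ {ω | a < W ω + f (V ω) ∧ V ω ∈ I} := by
    rintro ω (⟨hlt, hVω⟩ | ⟨⟨hWω, -⟩, hVω⟩)
    · exact ⟨by linarith [haI _ hVω], hVω⟩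
    · exact ⟨by linarith [haJ _ hVω], hJI hVω⟩
  have hle := measureReal_mono (μ := P) incl
  rw [measureReal_union₀ ((hWm.nullMeasurableSet_preimage measurableSet_Ioo).inter
    (hV.nullMeasurableSet_preimage hJ)) disj.aedisjoint] at hle
  rw [aboveExcess]
  linarith

theorem strictMonoOn_discordanceGap_add_comp [(P.map V).IsOpenPosMeasure]
    (hWV : IndepFun W V P) (hW : IdentDistrib (-W) W P P) (hW0 : 0 ∈ (P.map W).support)
    (hV : AEMeasurable V P) (hf : StrictMono f) (a : ℝ) :
    StrictMonoOn (discordanceGap P (fun ω ↦ W ω + f (V ω)) V a) {c | a ≤ f c} := by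
  intro c hac d _ hcd
  have hac : a ≤ f c := hac
  obtain ⟨e, hce, hed⟩ := exists_between hcd
  have hVJ : 0 < P.real (V ⁻¹' Set.Ioo e d) := by
    rw [← map_measureReal_apply_of_aemeasurable hV measurableSet_Ioo]
    exact ENNReal.toReal_pos (isOpen_Ioo.measure_ne_zero _ (Set.nonempty_Ioo.2 hed))
      (measure_ne_top _ _)
  have excess_pos (I : Set ℝ) (hI : MeasurableSet I) (hcI : I ⊆ Set.Ici c)
      (hedI : Set.Ioo e d ⊆ I) : 0 < aboveExcess P (fun ω ↦ W ω + f (V ω)) V a I :=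
    aboveExcess_add_comp_pos hWV hW hW0 hV hf.monotone.measurable hI
      (fun x hx ↦ hac.trans (hf.monotone (hcI hx)))
      (sub_pos.2 (hac.trans_lt (hf hce))) measurableSet_Ioo hedI
      (fun x hx ↦ by linarith [hf hx.1]) hVJ
  have hIco := excess_pos (Set.Ico c d) measurableSet_Ico (fun x hx ↦ hx.1)
    (fun x hx ↦ ⟨(hce.trans hx.1).le, hx.2⟩)
  have hIoc := excess_pos (Set.Ioc c d) measurableSet_Ioc (fun x hx ↦ hx.1.le)
    (fun x hx ↦ ⟨hce.trans hx.1, hx.2.le⟩)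
  rw [← sub_pos, discordanceGap_sub_discordanceGap hV hcd.le]
  exact add_pos hIco hIoc

end SymmetricNoise

section Gaussian

variable {Ω : Type*} [MeasurableSpace Ω] {P : Measure Ω} {X V W : Ω → ℝ}

lemma mem_support_gaussianReal (m : ℝ) (v : NNReal) : m ∈ (gaussianReal m v).support := by
  rcases eq_or_ne v 0 with rfl | hv
  · rw [gaussianReal_zero_var, Measure.mem_support_iff_forall]
    intro U hU
    simp [Measure.dirac_apply_of_mem (mem_of_mem_nhds hU)]
  · have := (gaussianReal_absolutelyContinuous' m hv).isOpenPosMeasure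
    simp [Measure.support_eq_univ]

lemma isOpenPosMeasure_map_of_hasGaussianLaw (hV : HasGaussianLaw V P) (hvar : 0 < Var[V; P]) :
    (P.map V).IsOpenPosMeasure := by
  rw [hV.map_eq_gaussianReal]
  exact (gaussianReal_absolutelyContinuous' _ (Real.toNNReal_pos.2 hvar).ne').isOpenPosMeasure

/-- The regression line of `X` on `V`: the conditional mean of `X` given `V = c` if the pair is
Gaussian. If `V` has variance `0`, its slope is the junk value `0`. -/
noncomputable def regressionLine (P : Measure Ω) (X V : Ω → ℝ) (c : ℝ) : ℝ :=
  P[X] + cov[X, V; P] / Var[V; P] * (c - P[V])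

/-- The residual of the linear regression of `X` on `V`. -/
noncomputable def regressionResidual (P : Measure Ω) (X V : Ω → ℝ) (ω : Ω) : ℝ :=
  X ω - regressionLine P X V (V ω)

lemma strictMono_regressionLine (hcov : 0 < cov[X, V; P]) (hvar : 0 < Var[V; P]) :
    StrictMono (regressionLine P X V) := fun c d hcd ↦ by
  have := mul_lt_mul_of_pos_left (sub_lt_sub_right hcd P[V]) (div_pos hcov hvar)
  simpa only [regressionLine, add_lt_add_iff_left] using this

lemma regressionResidual_eq_sub_const :
    regressionResidual P X V = fun ω ↦
      (X ω - cov[X, V; P] / Var[V; P] * V ω) - (P[X] - cov[X, V; P] / Var[V; P] * P[V]) := by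
  ext ω
  simp only [regressionResidual, regressionLine]
  ring

lemma integral_regressionResidual [IsProbabilityMeasure P] (hX : Integrable X P)
    (hV : Integrable V P) : P[regressionResidual P X V] = 0 := by
  have hβV := hV.const_mul (cov[X, V; P] / Var[V; P])
  have hsub : Integrable (fun ω ↦ X ω - cov[X, V; P] / Var[V; P] * V ω) P := hX.sub hβV
  rw [regressionResidual_eq_sub_const, integral_sub hsub (integrable_const _),
    integral_sub hX hβV, integral_const_mul, integral_const, probReal_univ, one_smul, sub_self]

lemma covariance_regressionResidual [IsProbabilityMeasure P] (hX : MemLp X 2 P)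
    (hV : MemLp V 2 P) (hvar : Var[V; P] ≠ 0) : cov[regressionResidual P X V, V; P] = 0 := by
  have hβV := hV.const_mul (cov[X, V; P] / Var[V; P])
  have hsub : MemLp (fun ω ↦ X ω - cov[X, V; P] / Var[V; P] * V ω) 2 P := hX.sub hβV
  rw [regressionResidual_eq_sub_const, covariance_sub_const_left (hsub.integrable one_le_two),
    covariance_fun_sub_left hX hβV hV, covariance_const_mul_left, covariance_self hV.aemeasurable,
    div_mul_cancel₀ _ hvar, sub_self]

lemma variance_pos_of_covariance_ne_zero [IsFiniteMeasure P] (hV : MemLp V 2 P)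
    (hcov : cov[X, V; P] ≠ 0) : 0 < Var[V; P] := by
  refine (variance_nonneg V P).lt_of_ne' fun hvar ↦ hcov ?_
  refine integral_eq_zero_of_ae ?_
  filter_upwards [ae_eq_integral_of_variance_eq_zero hV hvar] with ω hω
  rw [hω, sub_self, mul_zero, Pi.zero_apply]

lemma hasGaussianLaw_sub_const {E : Type*} [NormedAddCommGroup E] [NormedSpace ℝ E]
    [MeasurableSpace E] [BorelSpace E] {Y : Ω → E}
    (hY : HasGaussianLaw Y P) (k : E) : HasGaussianLaw (fun ω ↦ Y ω - k) P where
  isGaussian_map := by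
    have := hY.isGaussian_map
    have : IsGaussian ((P.map Y).map (fun y ↦ y - k)) := inferInstance
    rwa [AEMeasurable.map_map_of_aemeasurable (by fun_prop) hY.aemeasurable] at this

lemma hasGaussianLaw_linearCombination_prodMk (hXV : HasGaussianLaw (fun ω ↦ (X ω, V ω)) P)
    (r s t u : ℝ) :
    HasGaussianLaw (fun ω ↦ (r * X ω + s * V ω, t * X ω + u * V ω)) P :=
  hXV.map_fun ((r • ContinuousLinearMap.fst ℝ ℝ ℝ + s • ContinuousLinearMap.snd ℝ ℝ ℝ).prod
    (t • ContinuousLinearMap.fst ℝ ℝ ℝ + u • ContinuousLinearMap.snd ℝ ℝ ℝ))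

lemma hasGaussianLaw_regressionResidual_prodMk
    (hXV : HasGaussianLaw (fun ω ↦ (X ω, V ω)) P) :
    HasGaussianLaw (fun ω ↦ (regressionResidual P X V ω, V ω)) P := by
  have eq_sub_const : (fun ω ↦ (regressionResidual P X V ω, V ω)) = fun ω ↦
      (1 * X ω + -(cov[X, V; P] / Var[V; P]) * V ω, 0 * X ω + 1 * V ω)
        - (P[X] - cov[X, V; P] / Var[V; P] * P[V], 0) := by
    rw [regressionResidual_eq_sub_const]
    ext ω <;> simp only [Prod.mk_sub_mk] <;> ring
  rw [eq_sub_const]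
  exact hasGaussianLaw_sub_const (hasGaussianLaw_linearCombination_prodMk hXV 1 _ 0 1) _

lemma identDistrib_neg_of_hasGaussianLaw (hW : HasGaussianLaw W P) (hW0 : P[W] = 0) :
    IdentDistrib (-W) W P P where
  aemeasurable_fst := hW.aemeasurable.neg
  aemeasurable_snd := hW.aemeasurable
  map_eq := by
    rw [hW.neg.map_eq_gaussianReal, hW.map_eq_gaussianReal, variance_neg, integral_neg', hW0,
      neg_zero]

lemma integral_mem_support_map_of_hasGaussianLaw (hW : HasGaussianLaw W P) :
    P[W] ∈ (P.map W).support := by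
  rw [hW.map_eq_gaussianReal]
  exact mem_support_gaussianReal _ _

theorem discordance_minus_concordance_shifted_cutoff_general
    (hXV : HasGaussianLaw (fun ω ↦ (X ω, V ω)) P) (hcov : 0 < cov[X, V; P]) (a : ℝ) :
    StrictMonoOn (discordanceGap P X V a) {c | a ≤ regressionLine P X V c} := by
  have := hXV.isProbabilityMeasure
  have hvar : 0 < Var[V; P] := variance_pos_of_covariance_ne_zero hXV.snd.memLp_two hcov.ne'
  have := isOpenPosMeasure_map_of_hasGaussianLaw hXV.snd hvar
  have hWV := hasGaussianLaw_regressionResidual_prodMk hXV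
  have hW0 := integral_regressionResidual hXV.fst.integrable hXV.snd.integrable
  have indep : IndepFun (regressionResidual P X V) V P :=
    hWV.indepFun_of_covariance_eq_zero
      (covariance_regressionResidual hXV.fst.memLp_two hXV.snd.memLp_two hvar.ne')
  have decomp : (fun ω ↦ regressionResidual P X V ω + regressionLine P X V (V ω)) = X :=
    funext fun ω ↦ sub_add_cancel (X ω) _
  have mono := strictMonoOn_discordanceGap_add_comp indep
    (identDistrib_neg_of_hasGaussianLaw hWV.fst hW0)
    (hW0 ▸ integral_mem_support_map_of_hasGaussianLaw hWV.fst)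
    hXV.snd.aemeasurable (strictMono_regressionLine hcov hvar) a
  rwa [decomp] at mono

end Gaussian

section LinearCombination

variable {Ω : Type*} [MeasurableSpace Ω] {P : Measure Ω} {X Y : Ω → ℝ}

lemma covariance_linearCombination_right [IsFiniteMeasure P] (hXY : IndepFun X Y P)
    (hX : MemLp X 2 P) (hY : MemLp Y 2 P) (r s : ℝ) :
    cov[X, fun ω ↦ r * X ω + s * Y ω; P] = r * Var[X; P] := by
  have := covariance_add_right hX (hX.const_mul r) (hY.const_mul s)
  rw [covariance_const_mul_right, covariance_const_mul_right, hXY.covariance_eq_zero hX hY,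
    covariance_self hX.aemeasurable, mul_zero, add_zero] at this
  exact this

lemma variance_linearCombination (hXY : IndepFun X Y P)
    (hX : MemLp X 2 P) (hY : MemLp Y 2 P) (r s : ℝ) :
    Var[fun ω ↦ r * X ω + s * Y ω; P] = r ^ 2 * Var[X; P] + s ^ 2 * Var[Y; P] := by
  rw [IndepFun.variance_fun_add (hX.const_mul r) (hY.const_mul s)
    (hXY.comp (measurable_const_mul r) (measurable_const_mul s)), variance_const_mul,
    variance_const_mul]

lemma regressionLine_linearCombination [IsFiniteMeasure P] (hXY : IndepFun X Y P)
    (hX : MemLp X 2 P) (hY : MemLp Y 2 P) (hX0 : P[X] = 0) (hY0 : P[Y] = 0)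
    (hX1 : Var[X; P] = 1) (hY1 : Var[Y; P] = 1) {r s : ℝ} (hrs : r ^ 2 + s ^ 2 = 1) (c : ℝ) :
    regressionLine P X (fun ω ↦ r * X ω + s * Y ω) c = r * c := by
  have mean : ∫ ω, r * X ω + s * Y ω ∂P = 0 := by
    rw [integral_add ((hX.integrable one_le_two).const_mul r)
      ((hY.integrable one_le_two).const_mul s), integral_const_mul, integral_const_mul, hX0, hY0,
      mul_zero, mul_zero, add_zero]
  rw [regressionLine, mean, hX0, covariance_linearCombination_right hXY hX hY,
    variance_linearCombination hXY hX hY, hX1, hY1, mul_one, mul_one, mul_one, hrs, div_one,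
    zero_add, sub_zero]

theorem strictMonoOn_discordanceGap_linearCombination (hXY : IndepFun X Y P)
    (hX : HasLaw X (gaussianReal 0 1) P) (hY : HasLaw Y (gaussianReal 0 1) P) {r s : ℝ}
    (hr : 0 < r) (hrs : r ^ 2 + s ^ 2 = 1) (a : ℝ) :
    StrictMonoOn (discordanceGap P X (fun ω ↦ r * X ω + s * Y ω) a) {c | a ≤ r * c} := by
  have := hX.hasGaussianLaw.isProbabilityMeasure
  have hX2 := hX.hasGaussianLaw.memLp_two
  have hY2 := hY.hasGaussianLaw.memLp_two
  have hX0 : P[X] = 0 := by rw [hX.integral_eq, integral_id_gaussianReal]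
  have hY0 : P[Y] = 0 := by rw [hY.integral_eq, integral_id_gaussianReal]
  have hX1 : Var[X; P] = 1 := by rw [hX.variance_eq, variance_id_gaussianReal, NNReal.coe_one]
  have hY1 : Var[Y; P] = 1 := by rw [hY.variance_eq, variance_id_gaussianReal, NNReal.coe_one]
  have hcov : 0 < cov[X, fun ω ↦ r * X ω + s * Y ω; P] := by
    rwa [covariance_linearCombination_right hXY hX2 hY2, hX1, mul_one]
  have joint := hasGaussianLaw_linearCombination_prodMk
    (hXY.hasGaussianLaw hX.hasGaussianLaw hY.hasGaussianLaw) 1 0 r s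
  simp only [one_mul, zero_mul, add_zero] at joint
  simpa only [regressionLine_linearCombination hXY hX2 hY2 hX0 hY0 hX1 hY1 hrs]
    using discordance_minus_concordance_shifted_cutoff_general joint hcov a

end LinearCombination

/-- **Case A of the Appendix: shifting the second cutoff strictly increases the
discordance-minus-concordance measure.**
Let `Z₁, Z₂` be independent standard normals, `ρ ∈ (0,1)`, `V = ρ Z₁ + √(1−ρ²) Z₂`,
`m₁, m₂ > 0` with `m₁ ≥ ρ m₂`, and `μ > 0`. With
`h c = P(Z₁ > −m₁, V < c) + P(Z₁ < −m₁, V > c) − P(Z₁ > −m₁, V > c) − P(Z₁ < −m₁, V < c)`,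
one has `h (μ − m₂) > h (−m₂)`. -/
theorem discordance_minus_concordance_shifted_cutoff
    {Ω : Type*} [MeasurableSpace Ω] (P : Measure Ω) [IsProbabilityMeasure P]
    (Z₁ Z₂ : Ω → ℝ) (hZ₁ : Measurable Z₁) (hZ₂ : Measurable Z₂)
    (hlaw₁ : Measure.map Z₁ P = gaussianReal 0 1)
    (hlaw₂ : Measure.map Z₂ P = gaussianReal 0 1)
    (hindep : IndepFun Z₁ Z₂ P)
    (ρ : ℝ) (hρ : ρ ∈ Set.Ioo (0 : ℝ) 1)
    (V : Ω → ℝ) (hV : ∀ ω, V ω = ρ * Z₁ ω + Real.sqrt (1 - ρ ^ 2) * Z₂ ω)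
    (m₁ m₂ μ : ℝ) (hm₁ : 0 < m₁) (hm₂ : 0 < m₂) (hm : ρ * m₂ ≤ m₁) (hμ : 0 < μ)
    (h : ℝ → ℝ)
    (hh : ∀ c, h c =
      (P {ω | -m₁ < Z₁ ω ∧ V ω < c}).toReal + (P {ω | Z₁ ω < -m₁ ∧ c < V ω}).toReal
      - (P {ω | -m₁ < Z₁ ω ∧ c < V ω}).toReal
      - (P {ω | Z₁ ω < -m₁ ∧ V ω < c}).toReal) :
    h (-m₂) < h (μ - m₂) := by
  obtain rfl : V = fun ω ↦ ρ * Z₁ ω + √(1 - ρ ^ 2) * Z₂ ω := funext hV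
  have hsq : ρ ^ 2 + √(1 - ρ ^ 2) ^ 2 = 1 := by
    rw [Real.sq_sqrt (by nlinarith [hρ.1, hρ.2]), add_sub_cancel]
  have hmono := strictMonoOn_discordanceGap_linearCombination hindep ⟨hZ₁.aemeasurable, hlaw₁⟩
    ⟨hZ₂.aemeasurable, hlaw₂⟩ hρ.1 hsq (-m₁)
  have hmem : -m₁ ≤ ρ * -m₂ := by linarith
  have hmem' : -m₁ ≤ ρ * (μ - m₂) := by linarith [mul_pos hρ.1 hμ]
  rw [hh, hh]
  exact hmono hmem hmem' (by linarith)
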